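/- Vanishing of f (Appendix E): Let τ lie in the complex upper half-plane, write σ = τ/2, and let u, x, y ∈ ℂ be such that all theta-function values appearing in denominators below are nonzero. Then 2 S'(y,τ)·S'(u+y,τ)·℘₁(x−y,σ) + S'(y,τ)·S''(u+y,τ)·[−ζ₁(u+x,σ) + ζ₁(x−y,σ) + ζ₂(u+y,σ)] − S'(y,τ)·S'(u+y,τ)·℘₂(u+y,σ) + S''(y,τ)·S'(u+y,τ)·[−ζ₁(x,σ) + ζ₁(x−y,σ) + ζ₂(y,σ)] − S'(y,τ)·S'(u+y,τ)·℘₂(y,σ) + S''(x−y,τ)·[S'(x,τ)·S'(u+y,τ) + S'(y,τ)·S'(u+x,τ)] = 0. (With x = ξ_i, y = ξ_j, this identity proves that S(u(z)) satisfies the conserved-density equation ∂²S(u)/∂λ_i∂λ_j = Γ_{ij} ∂S(u)/∂λ_i + Γ_{ji} ∂S(u)/∂λ_j along solutions of the elliptic Löwner and Gibbons–Tsarev systems.) -/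

import Mathlib

open Complex

/-- Jacobi theta function θ₁(u,τ). -/
noncomputable def theta1 (u τ : ℂ) : ℂ :=
  -∑' k : ℤ, Complex.exp ((Real.pi : ℂ) * Complex.I * τ * ((k : ℂ) + 1/2)^2
      + 2 * (Real.pi : ℂ) * Complex.I * (u + 1/2) * ((k : ℂ) + 1/2))

/-- Jacobi theta function θ₂(u,τ). -/
noncomputable def theta2 (u τ : ℂ) : ℂ :=
  ∑' k : ℤ, Complex.exp ((Real.pi : ℂ) * Complex.I * τ * ((k : ℂ) + 1/2)^2
      + 2 * (Real.pi : ℂ) * Complex.I * u * ((k : ℂ) + 1/2))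

/-- Jacobi theta function θ₃(u,τ). -/
noncomputable def theta3 (u τ : ℂ) : ℂ :=
  ∑' k : ℤ, Complex.exp ((Real.pi : ℂ) * Complex.I * τ * (k : ℂ)^2
      + 2 * (Real.pi : ℂ) * Complex.I * u * (k : ℂ))

/-- Jacobi theta function θ₄(u,τ). -/
noncomputable def theta4 (u τ : ℂ) : ℂ :=
  ∑' k : ℤ, Complex.exp ((Real.pi : ℂ) * Complex.I * τ * (k : ℂ)^2
      + 2 * (Real.pi : ℂ) * Complex.I * (u + 1/2) * (k : ℂ))

/-- ζ_a(u,τ) = θ_a'(u,τ)/θ_a(u,τ). -/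
noncomputable def zeta1 (u τ : ℂ) : ℂ := deriv (fun v => theta1 v τ) u / theta1 u τ
noncomputable def zeta2 (u τ : ℂ) : ℂ := deriv (fun v => theta2 v τ) u / theta2 u τ
noncomputable def zeta3 (u τ : ℂ) : ℂ := deriv (fun v => theta3 v τ) u / theta3 u τ
noncomputable def zeta4 (u τ : ℂ) : ℂ := deriv (fun v => theta4 v τ) u / theta4 u τ

/-- ℘_a(u,τ) = −∂_u ζ_a(u,τ). -/
noncomputable def wp1 (u τ : ℂ) : ℂ := -deriv (fun v => zeta1 v τ) u
noncomputable def wp2 (u τ : ℂ) : ℂ := -deriv (fun v => zeta2 v τ) u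
noncomputable def wp1' (u τ : ℂ) : ℂ := deriv (fun v => wp1 v τ) u
noncomputable def wp2' (u τ : ℂ) : ℂ := deriv (fun v => wp2 v τ) u

/-- S'(u,τ) = ζ₁(u,τ) − ζ₄(u,τ). -/
noncomputable def Sp (u τ : ℂ) : ℂ := zeta1 u τ - zeta4 u τ
/-- S''(u,τ) = ∂_u S'(u,τ). -/
noncomputable def Spp (u τ : ℂ) : ℂ := deriv (fun v => Sp v τ) u
/-- S'''(u,τ) = ∂_u S''(u,τ). -/
noncomputable def Sppp (u τ : ℂ) : ℂ := deriv (fun v => Spp v τ) u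

/-- Partial derivative in the j-th coordinate of a ℂ-valued function on ℝ^N. -/
noncomputable def pdC {N : ℕ} (j : Fin N) (f : (Fin N → ℝ) → ℂ) (x : Fin N → ℝ) : ℂ :=
  fderiv ℝ f x (Pi.single j 1)

/-- Partial derivative in the j-th coordinate of an ℝ-valued function on ℝ^d. -/
noncomputable def pd {d : ℕ} (j : Fin d) (f : (Fin d → ℝ) → ℝ) (x : Fin d → ℝ) : ℝ :=
  fderiv ℝ f x (Pi.single j 1)

/-!
Write `σ = τ / 2`. Sorting the pairs `(k, l)` in the double series for `θ₂(a, σ) θ₂(b, σ)` by the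
parity of `k + l` expresses this product through theta functions of modulus `τ` at `a ± b`; half
period shifts give the analogous formulas for `θ₁ θ₁` and `θ₁ θ₂`. Differentiating them yields
`S'(u, τ) = θ₁'(0, σ) θ₂(u, σ) / (θ₂(0, σ) θ₁(u, σ))` and the degenerate Fay identity
`S'(z) S'(w) = S'(z + w) (ζ₁(z, σ) + ζ₁(w, σ) - ζ₂(z + w, σ))`.
The expression `f` of Appendix E is a combination, with coefficients `S'(u + y)` and `S'(y)`, of
the derivatives in `y` of two instances of the latter, both with `z = y - x`: one with `w = x` and
one with `w = u + x`.
-/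

open Topology

section Series

lemma hasSum_mul_prod {ι κ R : Type*} [NormedRing R] [NormedAlgebra ℝ R] [FiniteDimensional ℝ R]
    {f : ι → R} {g : κ → R} {a b : R} (hf : HasSum f a) (hg : HasSum g b) :
    HasSum (fun p : ι × κ => f p.1 * g p.2) (a * b) :=
  have := FiniteDimensional.complete ℝ R
  hf.mul hg (summable_mul_of_summable_norm hf.summable.norm hg.summable.norm)

lemma isCompl_range_add_sub_range_add_sub_sub_one :
    IsCompl (Set.range fun p : ℤ × ℤ => (p.1 + p.2, p.1 - p.2))
      (Set.range fun p : ℤ × ℤ => (p.1 + p.2, p.1 - p.2 - 1)) := by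
  refine IsCompl.of_le ?_ ?_
  · rintro _ ⟨⟨⟨p, q⟩, rfl⟩, ⟨⟨r, s⟩, h⟩⟩
    simp only [Prod.mk.injEq] at h
    omega
  · rintro ⟨k, l⟩ -
    rcases Int.even_or_odd' (k + l) with ⟨m, hm | hm⟩
    · exact Or.inl ⟨(m, k - m), by simp only [Prod.mk.injEq]; omega⟩
    · exact Or.inr ⟨(m + 1, k - m - 1), by simp only [Prod.mk.injEq]; omega⟩

lemma hasSum_of_hasSum_add_sub {M : Type*} [AddCommMonoid M] [TopologicalSpace M] [ContinuousAdd M]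
    {f : ℤ × ℤ → M} {a b : M}
    (heven : HasSum (fun p : ℤ × ℤ => f (p.1 + p.2, p.1 - p.2)) a)
    (hodd : HasSum (fun p : ℤ × ℤ => f (p.1 + p.2, p.1 - p.2 - 1)) b) :
    HasSum f (a + b) := by
  have inj_even : Function.Injective fun p : ℤ × ℤ => (p.1 + p.2, p.1 - p.2) := by
    rintro ⟨p, q⟩ ⟨r, s⟩ h
    simp only [Prod.mk.injEq] at h ⊢
    omega
  have inj_odd : Function.Injective fun p : ℤ × ℤ => (p.1 + p.2, p.1 - p.2 - 1) := by
    rintro ⟨p, q⟩ ⟨r, s⟩ h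
    simp only [Prod.mk.injEq] at h ⊢
    omega
  exact (inj_even.hasSum_range_iff.2 heven).add_isCompl
    isCompl_range_add_sub_range_add_sub_sub_one (inj_odd.hasSum_range_iff.2 hodd)

end Series

section Derivatives

variable {𝕜 F : Type*} [NontriviallyNormedField 𝕜] [NormedAddCommGroup F] [NormedSpace 𝕜 F]

lemma deriv_even_of_odd {f : 𝕜 → F} (hf : Function.Odd f) : Function.Even (deriv f) := fun u => by
  rw [← neg_inj, ← deriv_comp_neg f u, funext hf, deriv.fun_neg]

lemma deriv_odd_of_even {f : 𝕜 → F} (hf : Function.Even f) : Function.Odd (deriv f) := fun u => by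
  rw [← neg_inj, ← deriv_comp_neg f u, funext hf, neg_neg]

lemma hasDerivAt_mul_comp_add_sub {A : Type*} [NormedRing A] [NormedAlgebra 𝕜 A] {f g : 𝕜 → A}
    {a b : 𝕜} (hf : DifferentiableAt 𝕜 f (a + b)) (hg : DifferentiableAt 𝕜 g (a - b)) :
    HasDerivAt (fun v => f (v + b) * g (v - b))
      (deriv f (a + b) * g (a - b) + f (a + b) * deriv g (a - b)) a :=
  (hf.hasDerivAt.comp_add_const a b).mul (hg.hasDerivAt.comp_sub_const a b)

lemma differentiableAt_logDeriv [CompleteSpace 𝕜] {f : 𝕜 → 𝕜} {u : 𝕜} (hf : AnalyticAt 𝕜 f u)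
    (hu : f u ≠ 0) : DifferentiableAt 𝕜 (logDeriv f) u :=
  hf.deriv.differentiableAt.div hf.differentiableAt hu

end Derivatives

section Symmetries

lemma theta1_eq_neg_theta2 (u τ : ℂ) : theta1 u τ = -theta2 (u + 1 / 2) τ := rfl

lemma theta4_eq_theta3 (u τ : ℂ) : theta4 u τ = theta3 (u + 1 / 2) τ := rfl

lemma theta3_eq_jacobiTheta₂ (u τ : ℂ) : theta3 u τ = jacobiTheta₂ u τ :=
  tsum_congr fun k => by
    rw [jacobiTheta₂_term]
    ring_nf

lemma theta2_term_eq (u τ : ℂ) (k : ℤ) :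
    exp (Real.pi * I * τ * ((k : ℂ) + 1 / 2) ^ 2 + 2 * Real.pi * I * u * ((k : ℂ) + 1 / 2))
      = exp (Real.pi * I * (τ / 4 + u)) * jacobiTheta₂_term k (u + τ / 2) τ := by
  rw [jacobiTheta₂_term, ← exp_add]
  ring_nf

lemma theta2_eq_exp_mul_jacobiTheta₂ (u τ : ℂ) :
    theta2 u τ = exp (Real.pi * I * (τ / 4 + u)) * jacobiTheta₂ (u + τ / 2) τ := by
  rw [jacobiTheta₂, ← tsum_mul_left]
  exact tsum_congr (theta2_term_eq u τ)

lemma theta3_add_one (u τ : ℂ) : theta3 (u + 1) τ = theta3 u τ := by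
  simp only [theta3_eq_jacobiTheta₂, jacobiTheta₂_add_left]

lemma theta2_add_one (u τ : ℂ) : theta2 (u + 1) τ = -theta2 u τ := by
  rw [theta2_eq_exp_mul_jacobiTheta₂, theta2_eq_exp_mul_jacobiTheta₂, add_right_comm,
    jacobiTheta₂_add_left, ← add_assoc, mul_add, mul_one, exp_add, exp_pi_mul_I]
  ring

lemma theta3_neg (u τ : ℂ) : theta3 (-u) τ = theta3 u τ := by
  simp only [theta3_eq_jacobiTheta₂, jacobiTheta₂_neg_left]

lemma theta2_neg (u τ : ℂ) : theta2 (-u) τ = theta2 u τ := by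
  rw [theta2, ← (Equiv.subLeft (-1 : ℤ)).tsum_eq]
  refine tsum_congr fun k => ?_
  rw [Equiv.subLeft_apply]
  push_cast
  ring_nf

lemma theta1_neg (u τ : ℂ) : theta1 (-u) τ = -theta1 u τ := by
  rw [theta1_eq_neg_theta2, theta1_eq_neg_theta2, ← theta2_neg (-u + 1 / 2), ← theta2_add_one]
  ring_nf

lemma theta4_neg (u τ : ℂ) : theta4 (-u) τ = theta4 u τ := by
  rw [theta4_eq_theta3, theta4_eq_theta3, ← theta3_neg (-u + 1 / 2), ← theta3_add_one]
  ring_nf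

lemma deriv_theta1_neg (u τ : ℂ) : deriv (theta1 · τ) (-u) = deriv (theta1 · τ) u :=
  deriv_even_of_odd (theta1_neg · τ) u

lemma deriv_theta2_neg (u τ : ℂ) : deriv (theta2 · τ) (-u) = -deriv (theta2 · τ) u :=
  deriv_odd_of_even (theta2_neg · τ) u

lemma deriv_theta3_neg (u τ : ℂ) : deriv (theta3 · τ) (-u) = -deriv (theta3 · τ) u :=
  deriv_odd_of_even (theta3_neg · τ) u

lemma deriv_theta4_neg (u τ : ℂ) : deriv (theta4 · τ) (-u) = -deriv (theta4 · τ) u :=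
  deriv_odd_of_even (theta4_neg · τ) u

lemma zeta1_neg (u τ : ℂ) : zeta1 (-u) τ = -zeta1 u τ := by
  rw [zeta1, zeta1, deriv_theta1_neg, theta1_neg, div_neg]

lemma zeta4_neg (u τ : ℂ) : zeta4 (-u) τ = -zeta4 u τ := by
  rw [zeta4, zeta4, deriv_theta4_neg, theta4_neg, neg_div]

lemma Sp_neg (u τ : ℂ) : Sp (-u) τ = -Sp u τ := by
  rw [Sp, Sp, zeta1_neg, zeta4_neg, neg_sub_neg, neg_sub]

end Symmetries

section UpperHalfPlane

variable {τ : ℂ}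

lemma half_im_pos (hτ : 0 < τ.im) : 0 < (τ / 2).im := by
  simpa using hτ

lemma hasSum_theta3 (u : ℂ) (hτ : 0 < τ.im) :
    HasSum (fun k : ℤ => exp (Real.pi * I * τ * (k : ℂ) ^ 2 + 2 * Real.pi * I * u * k))
      (theta3 u τ) := by
  rw [theta3_eq_jacobiTheta₂]
  refine (hasSum_jacobiTheta₂_term u hτ).congr_fun fun k => ?_
  rw [jacobiTheta₂_term]
  ring_nf

lemma hasSum_theta2 (u : ℂ) (hτ : 0 < τ.im) :
    HasSum (fun k : ℤ => exp (Real.pi * I * τ * ((k : ℂ) + 1 / 2) ^ 2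
      + 2 * Real.pi * I * u * ((k : ℂ) + 1 / 2))) (theta2 u τ) := by
  simp only [theta2_eq_exp_mul_jacobiTheta₂, theta2_term_eq]
  exact (hasSum_jacobiTheta₂_term (u + τ / 2) hτ).mul_left _

lemma differentiable_theta3 (hτ : 0 < τ.im) : Differentiable ℂ (theta3 · τ) := by
  simp only [theta3_eq_jacobiTheta₂]
  exact fun u => differentiableAt_jacobiTheta₂_fst u hτ

lemma differentiable_theta2 (hτ : 0 < τ.im) : Differentiable ℂ (theta2 · τ) := by
  have h : Differentiable ℂ (jacobiTheta₂ · τ) := fun u => differentiableAt_jacobiTheta₂_fst u hτ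
  simp only [theta2_eq_exp_mul_jacobiTheta₂]
  fun_prop

lemma differentiable_theta1 (hτ : 0 < τ.im) : Differentiable ℂ (theta1 · τ) :=
  ((differentiable_theta2 hτ).comp (differentiable_id.add_const (1 / 2))).neg

lemma differentiable_theta4 (hτ : 0 < τ.im) : Differentiable ℂ (theta4 · τ) :=
  (differentiable_theta3 hτ).comp (differentiable_id.add_const (1 / 2))

/-! ### Product formulas -/

lemma theta2_mul_theta2 (a b : ℂ) (hτ : 0 < τ.im) :
    theta2 a (τ / 2) * theta2 b (τ / 2)
      = theta2 (a + b) τ * theta3 (a - b) τ + theta3 (a + b) τ * theta2 (a - b) τ := by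
  have hσ := half_im_pos hτ
  refine (hasSum_mul_prod (hasSum_theta2 a hσ) (hasSum_theta2 b hσ)).unique
    (hasSum_of_hasSum_add_sub ?_ ?_)
  · convert hasSum_mul_prod (hasSum_theta2 (a + b) hτ) (hasSum_theta3 (a - b) hτ) using 2 with p
    rw [← exp_add, ← exp_add]
    push_cast
    ring_nf
  · convert hasSum_mul_prod (hasSum_theta3 (a + b) hτ) (hasSum_theta2 (a - b) hτ) using 2 with p
    rw [← exp_add, ← exp_add]
    push_cast
    ring_nf

lemma theta1_mul_theta1 (a b : ℂ) (hτ : 0 < τ.im) :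
    theta1 a (τ / 2) * theta1 b (τ / 2)
      = theta3 (a + b) τ * theta2 (a - b) τ - theta2 (a + b) τ * theta3 (a - b) τ := by
  have h := theta2_mul_theta2 (a + 1 / 2) (b + 1 / 2) hτ
  rw [show a + 1 / 2 + (b + 1 / 2) = a + b + 1 by ring, add_sub_add_right_eq_sub,
    theta3_add_one, theta2_add_one] at h
  rw [theta1_eq_neg_theta2, theta1_eq_neg_theta2]
  linear_combination h

lemma theta1_mul_theta2 (a b : ℂ) (hτ : 0 < τ.im) :
    theta1 a (τ / 2) * theta2 b (τ / 2)
      = theta1 (a + b) τ * theta4 (a - b) τ + theta4 (a + b) τ * theta1 (a - b) τ := by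
  have h := theta2_mul_theta2 (a + 1 / 2) b hτ
  rw [add_right_comm, add_sub_right_comm] at h
  simp only [theta1_eq_neg_theta2, theta4_eq_theta3]
  linear_combination -h

lemma deriv_theta1_mul_theta1 (a b : ℂ) (hτ : 0 < τ.im) :
    deriv (theta1 · (τ / 2)) a * theta1 b (τ / 2)
      = deriv (theta3 · τ) (a + b) * theta2 (a - b) τ
        + theta3 (a + b) τ * deriv (theta2 · τ) (a - b)
        - (deriv (theta2 · τ) (a + b) * theta3 (a - b) τ
          + theta2 (a + b) τ * deriv (theta3 · τ) (a - b)) := by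
  rw [← deriv_mul_const_field, funext fun v => theta1_mul_theta1 v b hτ]
  have h2 := differentiable_theta2 hτ
  have h3 := differentiable_theta3 hτ
  exact ((hasDerivAt_mul_comp_add_sub (h3 _) (h2 _)).sub
    (hasDerivAt_mul_comp_add_sub (h2 _) (h3 _))).deriv

lemma deriv_theta1_mul_theta2 (a b : ℂ) (hτ : 0 < τ.im) :
    deriv (theta1 · (τ / 2)) a * theta2 b (τ / 2)
      = deriv (theta1 · τ) (a + b) * theta4 (a - b) τ
        + theta1 (a + b) τ * deriv (theta4 · τ) (a - b)
        + (deriv (theta4 · τ) (a + b) * theta1 (a - b) τ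
          + theta4 (a + b) τ * deriv (theta1 · τ) (a - b)) := by
  rw [← deriv_mul_const_field, funext fun v => theta1_mul_theta2 v b hτ]
  have h1 := differentiable_theta1 hτ
  have h4 := differentiable_theta4 hτ
  exact ((hasDerivAt_mul_comp_add_sub (h1 _) (h4 _)).add
    (hasDerivAt_mul_comp_add_sub (h4 _) (h1 _))).deriv

lemma deriv_theta2_mul_theta2 (a b : ℂ) (hτ : 0 < τ.im) :
    deriv (theta2 · (τ / 2)) a * theta2 b (τ / 2)
      = deriv (theta2 · τ) (a + b) * theta3 (a - b) τ
        + theta2 (a + b) τ * deriv (theta3 · τ) (a - b)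
        + (deriv (theta3 · τ) (a + b) * theta2 (a - b) τ
          + theta3 (a + b) τ * deriv (theta2 · τ) (a - b)) := by
  rw [← deriv_mul_const_field, funext fun v => theta2_mul_theta2 v b hτ]
  have h2 := differentiable_theta2 hτ
  have h3 := differentiable_theta3 hτ
  exact ((hasDerivAt_mul_comp_add_sub (h2 _) (h3 _)).add
    (hasDerivAt_mul_comp_add_sub (h3 _) (h2 _))).deriv

/-! ### The degenerate Fay identity -/

lemma theta1_mul_theta2_zero (u : ℂ) (hτ : 0 < τ.im) :
    theta1 u (τ / 2) * theta2 0 (τ / 2) = 2 * (theta1 u τ * theta4 u τ) := by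
  rw [theta1_mul_theta2 u 0 hτ, add_zero, sub_zero]
  ring

lemma deriv_theta1_zero_mul_theta2 (u : ℂ) (hτ : 0 < τ.im) :
    deriv (theta1 · (τ / 2)) 0 * theta2 u (τ / 2)
      = 2 * (deriv (theta1 · τ) u * theta4 u τ - theta1 u τ * deriv (theta4 · τ) u) := by
  rw [deriv_theta1_mul_theta2 0 u hτ, zero_add, zero_sub, theta1_neg, theta4_neg,
    deriv_theta1_neg, deriv_theta4_neg]
  ring

lemma deriv_theta1_zero_mul_theta1 (u : ℂ) (hτ : 0 < τ.im) :
    deriv (theta1 · (τ / 2)) 0 * theta1 u (τ / 2)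
      = 2 * (deriv (theta3 · τ) u * theta2 u τ - theta3 u τ * deriv (theta2 · τ) u) := by
  rw [deriv_theta1_mul_theta1 0 u hτ, zero_add, zero_sub, theta2_neg, theta3_neg,
    deriv_theta2_neg, deriv_theta3_neg]
  ring

lemma deriv_theta1_mul_theta1_add_theta1_mul_deriv_theta1 (z w : ℂ) (hτ : 0 < τ.im) :
    deriv (theta1 · (τ / 2)) z * theta1 w (τ / 2) + theta1 z (τ / 2) * deriv (theta1 · (τ / 2)) w
      = 2 * (deriv (theta3 · τ) (z + w) * theta2 (z - w) τ
        - deriv (theta2 · τ) (z + w) * theta3 (z - w) τ) := by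
  have hzw := deriv_theta1_mul_theta1 z w hτ
  have hwz := deriv_theta1_mul_theta1 w z hτ
  rw [add_comm w z, ← neg_sub z w, theta2_neg, theta3_neg, deriv_theta2_neg, deriv_theta3_neg]
    at hwz
  linear_combination hzw + hwz

lemma theta_degenerate_fay (z w : ℂ) (hτ : 0 < τ.im) :
    deriv (theta1 · (τ / 2)) 0 * theta1 (z + w) (τ / 2) * (theta2 z (τ / 2) * theta2 w (τ / 2))
      = theta2 0 (τ / 2) *
        ((deriv (theta1 · (τ / 2)) z * theta1 w (τ / 2)
            + theta1 z (τ / 2) * deriv (theta1 · (τ / 2)) w) * theta2 (z + w) (τ / 2)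
          - theta1 z (τ / 2) * theta1 w (τ / 2) * deriv (theta2 · (τ / 2)) (z + w)) := by
  have hsum := theta2_mul_theta2 (z + w) 0 hτ
  have hsum_deriv := deriv_theta2_mul_theta2 (z + w) 0 hτ
  rw [add_zero, sub_zero] at hsum hsum_deriv
  rw [deriv_theta1_zero_mul_theta1 _ hτ, deriv_theta1_mul_theta1_add_theta1_mul_deriv_theta1 z w hτ,
    theta2_mul_theta2 z w hτ, theta1_mul_theta1 z w hτ]
  linear_combination
    -2 * (deriv (theta3 · τ) (z + w) * theta2 (z - w) τ
      - deriv (theta2 · τ) (z + w) * theta3 (z - w) τ) * hsum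
    + (theta3 (z + w) τ * theta2 (z - w) τ - theta2 (z + w) τ * theta3 (z - w) τ) * hsum_deriv

lemma theta1_half_mul_theta2_zero_ne_zero {u : ℂ} (hτ : 0 < τ.im) (h1 : theta1 u τ ≠ 0)
    (h4 : theta4 u τ ≠ 0) : theta1 u (τ / 2) * theta2 0 (τ / 2) ≠ 0 := by
  rw [theta1_mul_theta2_zero u hτ]
  exact mul_ne_zero two_ne_zero (mul_ne_zero h1 h4)

lemma Sp_eq_theta_quotient {u : ℂ} (hτ : 0 < τ.im) (h1 : theta1 u τ ≠ 0) (h4 : theta4 u τ ≠ 0) :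
    Sp u τ = deriv (theta1 · (τ / 2)) 0 * theta2 u (τ / 2)
      / (theta1 u (τ / 2) * theta2 0 (τ / 2)) := by
  rw [theta1_mul_theta2_zero u hτ, deriv_theta1_zero_mul_theta2 u hτ,
    mul_div_mul_left _ _ two_ne_zero, Sp, zeta1, zeta4, div_sub_div _ _ h1 h4]

lemma Sp_mul_Sp {z w : ℂ} (hτ : 0 < τ.im) (hz1 : theta1 z τ ≠ 0) (hz4 : theta4 z τ ≠ 0)
    (hw1 : theta1 w τ ≠ 0) (hw4 : theta4 w τ ≠ 0)
    (hzw1 : theta1 (z + w) τ ≠ 0) (hzw4 : theta4 (z + w) τ ≠ 0)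
    (hzw2 : theta2 (z + w) (τ / 2) ≠ 0) :
    Sp z τ * Sp w τ
      = Sp (z + w) τ * (zeta1 z (τ / 2) + zeta1 w (τ / 2) - zeta2 (z + w) (τ / 2)) := by
  obtain ⟨hz, h0⟩ := mul_ne_zero_iff.1 (theta1_half_mul_theta2_zero_ne_zero hτ hz1 hz4)
  have hw := left_ne_zero_of_mul (theta1_half_mul_theta2_zero_ne_zero hτ hw1 hw4)
  have hzw := left_ne_zero_of_mul (theta1_half_mul_theta2_zero_ne_zero hτ hzw1 hzw4)
  rw [Sp_eq_theta_quotient hτ hz1 hz4, Sp_eq_theta_quotient hτ hw1 hw4,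
    Sp_eq_theta_quotient hτ hzw1 hzw4, zeta1, zeta1, zeta2]
  field_simp
  linear_combination deriv (theta1 · (τ / 2)) 0 * theta_degenerate_fay z w hτ

lemma Sp_sub_mul_Sp {x y : ℂ} (hτ : 0 < τ.im) (hx1 : theta1 x τ ≠ 0) (hx4 : theta4 x τ ≠ 0)
    (hy1 : theta1 y τ ≠ 0) (hy4 : theta4 y τ ≠ 0)
    (hxy1 : theta1 (x - y) τ ≠ 0) (hxy4 : theta4 (x - y) τ ≠ 0)
    (hy2 : theta2 y (τ / 2) ≠ 0) :
    Sp (x - y) τ * Sp x τ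
      = Sp y τ * (zeta1 (x - y) (τ / 2) + zeta2 y (τ / 2) - zeta1 x (τ / 2)) := by
  have hyx1 : theta1 (-(x - y)) τ ≠ 0 := by rwa [theta1_neg, neg_ne_zero]
  have hyx4 : theta4 (-(x - y)) τ ≠ 0 := by rwa [theta4_neg]
  have hadd : -(x - y) + x = y := by ring
  have h := Sp_mul_Sp hτ hyx1 hyx4 hx1 hx4 (by rwa [hadd]) (by rwa [hadd]) (by rwa [hadd])
  rw [hadd, Sp_neg, zeta1_neg] at h
  linear_combination -h

/-! ### Differentiating the Fay identity -/

lemma hasDerivAt_zeta1 {u : ℂ} (hτ : 0 < τ.im) (hu : theta1 u τ ≠ 0) :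
    HasDerivAt (zeta1 · τ) (-wp1 u τ) u := by
  rw [wp1, neg_neg]
  exact (differentiableAt_logDeriv ((differentiable_theta1 hτ).analyticAt u) hu).hasDerivAt

lemma hasDerivAt_zeta2 {u : ℂ} (hτ : 0 < τ.im) (hu : theta2 u τ ≠ 0) :
    HasDerivAt (zeta2 · τ) (-wp2 u τ) u := by
  rw [wp2, neg_neg]
  exact (differentiableAt_logDeriv ((differentiable_theta2 hτ).analyticAt u) hu).hasDerivAt

lemma hasDerivAt_Sp {u : ℂ} (hτ : 0 < τ.im) (h1 : theta1 u τ ≠ 0) (h4 : theta4 u τ ≠ 0) :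
    HasDerivAt (Sp · τ) (Spp u τ) u :=
  ((differentiableAt_logDeriv ((differentiable_theta1 hτ).analyticAt u) h1).sub
    (differentiableAt_logDeriv ((differentiable_theta4 hτ).analyticAt u) h4)).hasDerivAt

lemma Spp_sub_mul_Sp {x y : ℂ} (hτ : 0 < τ.im) (hx1 : theta1 x τ ≠ 0) (hx4 : theta4 x τ ≠ 0)
    (hy1 : theta1 y τ ≠ 0) (hy4 : theta4 y τ ≠ 0)
    (hxy1 : theta1 (x - y) τ ≠ 0) (hxy4 : theta4 (x - y) τ ≠ 0)
    (hy2 : theta2 y (τ / 2) ≠ 0) :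
    -Spp (x - y) τ * Sp x τ
      = Spp y τ * (zeta1 (x - y) (τ / 2) + zeta2 y (τ / 2) - zeta1 x (τ / 2))
        + Sp y τ * (wp1 (x - y) (τ / 2) - wp2 y (τ / 2)) := by
  have hσ := half_im_pos hτ
  have hxy := left_ne_zero_of_mul (theta1_half_mul_theta2_zero_ne_zero hτ hxy1 hxy4)
  have hfay : (fun v => Sp (x - v) τ * Sp x τ) =ᶠ[𝓝 y]
      fun v => Sp v τ * (zeta1 (x - v) (τ / 2) + zeta2 v (τ / 2) - zeta1 x (τ / 2)) := by
    have c1 := (differentiable_theta1 hτ).continuous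
    have c2 := (differentiable_theta2 hσ).continuous
    have c4 := (differentiable_theta4 hτ).continuous
    have csub : Continuous (x - ·) := continuous_sub_left x
    filter_upwards [c1.continuousAt.eventually_ne hy1, c4.continuousAt.eventually_ne hy4,
      (c1.comp csub).continuousAt.eventually_ne hxy1,
      (c4.comp csub).continuousAt.eventually_ne hxy4,
      c2.continuousAt.eventually_ne hy2] with v hv1 hv4 hxv1 hxv4 hv2
    exact Sp_sub_mul_Sp hτ hx1 hx4 hv1 hv4 hxv1 hxv4 hv2
  have hleft := ((hasDerivAt_Sp hτ hxy1 hxy4).comp_const_sub x y).mul_const (Sp x τ)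
  have hright := (hasDerivAt_Sp hτ hy1 hy4).mul
    ((((hasDerivAt_zeta1 hσ hxy).comp_const_sub x y).add (hasDerivAt_zeta2 hσ hy2)).sub_const
      (zeta1 x (τ / 2)))
  have h := hleft.unique (hright.congr_of_eventuallyEq hfay)
  rwa [neg_neg, ← sub_eq_add_neg] at h

end UpperHalfPlane

/-- Vanishing of f (Appendix E): the identity proving that S(u(z)) satisfies the
conserved-density equation along solutions of the elliptic Löwner and
Gibbons–Tsarev systems. Here σ = τ/2. -/
theorem appendixE_f_vanishes (τ u x y : ℂ) (hτ : 0 < τ.im)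
    (h1 : theta1 y τ ≠ 0) (h2 : theta4 y τ ≠ 0)
    (h3 : theta1 (u + y) τ ≠ 0) (h4 : theta4 (u + y) τ ≠ 0)
    (h5 : theta1 x τ ≠ 0) (h6 : theta4 x τ ≠ 0)
    (h7 : theta1 (u + x) τ ≠ 0) (h8 : theta4 (u + x) τ ≠ 0)
    (h9 : theta1 (x - y) τ ≠ 0) (h10 : theta4 (x - y) τ ≠ 0)
    (h11 : theta1 (x - y) (τ / 2) ≠ 0) (h12 : theta1 (u + x) (τ / 2) ≠ 0)
    (h13 : theta1 x (τ / 2) ≠ 0)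
    (h14 : theta2 (u + y) (τ / 2) ≠ 0) (h15 : theta2 y (τ / 2) ≠ 0) :
    2 * Sp y τ * Sp (u + y) τ * wp1 (x - y) (τ / 2)
      + Sp y τ * Spp (u + y) τ
          * (-zeta1 (u + x) (τ / 2) + zeta1 (x - y) (τ / 2) + zeta2 (u + y) (τ / 2))
      - Sp y τ * Sp (u + y) τ * wp2 (u + y) (τ / 2)
      + Spp y τ * Sp (u + y) τ
          * (-zeta1 x (τ / 2) + zeta1 (x - y) (τ / 2) + zeta2 y (τ / 2))
      - Sp y τ * Sp (u + y) τ * wp2 y (τ / 2)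
      + Spp (x - y) τ * (Sp x τ * Sp (u + y) τ + Sp y τ * Sp (u + x) τ) = 0 := by
  have hxy := Spp_sub_mul_Sp hτ h5 h6 h1 h2 h9 h10 h15
  have hsub : u + x - (u + y) = x - y := add_sub_add_left_eq_sub x y u
  have huxy := Spp_sub_mul_Sp hτ h7 h8 h3 h4 (by rwa [hsub]) (by rwa [hsub]) h14
  rw [hsub] at huxy
  linear_combination -Sp (u + y) τ * hxy - Sp y τ * huxy
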